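/- If a finite ULD lattice L belongs to L(CFG), i.e. L is order-isomorphic to the configuration space of some chip firing game reaching a unique fixed point, then for every meet-irreducible m of L the system E(m) has a non-negative integer solution. -/

import Mathlib

open Classical

section CFGdefs

variable {V : Type*}

/-- Out-degree of a vertex in a directed multigraph with edge multiplicities `E`. -/
noncomputable def outDeg (E : V → V → ℕ) (v : V) : ℕ := ∑ᶠ u, E v u

/-- A vertex is a sink if all its outgoing edges are loops. -/
def IsSink (E : V → V → ℕ) (v : V) : Prop := outDeg E v = E v v

/-- A vertex is firable in configuration `c`. -/
def Firable (E : V → V → ℕ) (c : V → ℕ) (v : V) : Prop :=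
  ¬ IsSink E v ∧ outDeg E v ≤ c v

/-- The result of firing vertex `v` in configuration `c`. -/
noncomputable def fire (E : V → V → ℕ) (c : V → ℕ) (v : V) : V → ℕ :=
  fun u => if u = v then c v - outDeg E v + E v v else c u + E v u

/-- The configuration obtained by firing a list of vertices in order. -/
noncomputable def fireList (E : V → V → ℕ) : (V → ℕ) → List V → (V → ℕ)
  | c, [] => c
  | c, v :: l => fireList E (fire E c v) l

/-- A list of vertices is a valid firing sequence from `c`. -/
def ValidSeq (E : V → V → ℕ) : (V → ℕ) → List V → Prop
  | _, [] => True
  | c, v :: l => Firable E c v ∧ ValidSeq E (fire E c v) l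

/-- `c'` is reachable from `c` by a finite sequence of firings. -/
def Reaches (E : V → V → ℕ) (c c' : V → ℕ) : Prop :=
  ∃ l : List V, ValidSeq E c l ∧ fireList E c l = c'

/-- A configuration with no firable vertex. -/
def FixedPt (E : V → V → ℕ) (c : V → ℕ) : Prop := ∀ v, ¬ Firable E c v

/-- The chip firing game `CFG(G,O)` reaches a unique fixed point. -/
def ReachesUFP (E : V → V → ℕ) (O : V → ℕ) : Prop :=
  ∃ fp : V → ℕ, Reaches E O fp ∧ FixedPt E fp ∧ ∀ c, Reaches E O c → Reaches E c fp

/-- The game is simple: in every firing sequence from `O` to the fixed point,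
each vertex fires at most once. -/
def SimpleCFG (E : V → V → ℕ) (O : V → ℕ) : Prop :=
  ∀ l : List V, ValidSeq E O l → FixedPt E (fireList E O l) → l.Nodup

/-- Single firing step from `c` to `c'` by firing vertex `v`. -/
def FireStep (E : V → V → ℕ) (c : V → ℕ) (v : V) (c' : V → ℕ) : Prop :=
  Firable E c v ∧ fire E c v = c'

/-- The partial order `L` is order-isomorphic to the configuration space of
`CFG(G,O)` ordered by reachability. -/
def Generates (E : V → V → ℕ) (O : V → ℕ) (L : Type*) [PartialOrder L] : Prop :=
  ∃ f : L ≃ {c : V → ℕ // Reaches E O c},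
    ∀ a b : L, a ≤ b ↔ Reaches E (f a).val (f b).val

/-- The support graph is connected (as an undirected graph). -/
def ConnectedG (E : V → V → ℕ) : Prop :=
  ∀ u v : V, Relation.ReflTransGen (fun a b => 0 < E a b ∨ 0 < E b a) u v

/-- The support graph together with its initial data is an Abelian Sandpile Model. -/
def IsASM (E : V → V → ℕ) : Prop :=
  ConnectedG E ∧ ∃ s : V, IsSink E s ∧ (∀ v, IsSink E v → v = s) ∧
    ∀ v₁ v₂ : V, v₁ ≠ v₂ → v₁ ≠ s → v₂ ≠ s → E v₁ v₂ = E v₂ v₁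

/-- The directed multigraph has no directed cycle. -/
def AcyclicG (E : V → V → ℕ) : Prop :=
  ∀ v : V, ¬ Relation.TransGen (fun a b => 0 < E a b) v v

end CFGdefs

/-- `L` is generated by some chip firing game reaching a unique fixed point. -/
def MemLCFG (L : Type*) [PartialOrder L] : Prop :=
  ∃ (V : Type) (_ : Finite V) (E : V → V → ℕ) (O : V → ℕ),
    ReachesUFP E O ∧ Generates E O L

/-- `L` is generated by some Abelian Sandpile Model reaching a unique fixed point. -/
def MemLASM (L : Type*) [PartialOrder L] : Prop :=
  ∃ (V : Type) (_ : Finite V) (E : V → V → ℕ) (O : V → ℕ),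
    IsASM E ∧ ReachesUFP E O ∧ Generates E O L

section Latticedefs

variable {L : Type*} [Lattice L]

/-- `m` is meet-irreducible: it has exactly one upper cover. -/
def MeetIrred (m : L) : Prop := ∃! y, m ⋖ y

/-- `j` is join-irreducible: it has exactly one lower cover. -/
def JoinIrred (j : L) : Prop := ∃! y, y ⋖ j

/-- The set `M_x \ M_y` of meet-irreducibles above `x` but not above `y`. -/
def MsetDiff (x y : L) : Set L := {m | MeetIrred m ∧ x ≤ m ∧ ¬ y ≤ m}

/-- The set `M \ M_a` of meet-irreducibles not above `a`. -/
def MnotAbove (a : L) : Set L := {m | MeetIrred m ∧ ¬ a ≤ m}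

/-- `x⁺`: the join of all upper covers of `x`. -/
noncomputable def uplus [Fintype L] [OrderBot L] (x : L) : L :=
  Finset.univ.sup (fun y => if x ⋖ y then y else ⊥)

/-- `L` is upper locally distributive: for every `x ≠ ⊤` the interval `[x, x⁺]`
is isomorphic to a Boolean lattice (a hypercube). -/
def IsULD (L : Type*) [Lattice L] [Fintype L] [BoundedOrder L] : Prop :=
  ∀ x : L, x ≠ ⊤ → ∃ n : ℕ, Nonempty (↥(Set.Icc x (uplus x)) ≃o Set (Fin n))

/-- `𝔘_m`: the minimal elements of `{x : ∃ y, x ⋖ y and 𝔪(x,y) = m}`. -/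
def Uset (m : L) : Set L :=
  {x | Minimal (fun z => ∃ y, z ⋖ y ∧ MsetDiff z y = {m}) x}

/-- `𝔏_m`: the maximal elements of `{x : a ≰ x for every a ∈ 𝔘_m}`. -/
def Lset (m : L) : Set L :=
  {x | Maximal (fun z => ∀ a ∈ Uset m, ¬ a ≤ z) x}

/-- `(w, e)` is a (non-negative integer) solution of the system `E(m)`. -/
def SolvesE [OrderBot L] (m : L) (w : ℕ) (e : L → ℕ) : Prop :=
  (Uset m = {(⊥ : L)} → 1 ≤ w) ∧
  (Uset m ≠ {(⊥ : L)} →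
    (∀ a ∈ Lset m, (∑ᶠ x ∈ MnotAbove a, e x) < w) ∧
    (∀ a ∈ Uset m, w ≤ ∑ᶠ x ∈ MnotAbove a, e x))

/-- The system `E(m)` has a non-negative integer solution. -/
def HasSolE [OrderBot L] (m : L) : Prop := ∃ w e, SolvesE m w e

/-- The variable `e_{x,m}` occurs in the system `𝔈(m)`. -/
def VarOccurs [OrderBot L] (x m : L) : Prop :=
  MeetIrred m ∧ Uset m ≠ {(⊥ : L)} ∧ ∃ a ∈ Uset m ∪ Lset m, x ∈ MnotAbove a

/-- `(W, Ee)` is a non-negative integer solution of the system `Ω`. -/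
def SolvesOmega [OrderBot L] (W : L → ℕ) (Ee : L → L → ℕ) : Prop :=
  (∀ m : L, MeetIrred m → SolvesE m (W m) (fun x => Ee x m)) ∧
  (∀ m₁ m₂ : L, m₁ ≠ m₂ → VarOccurs m₁ m₂ → VarOccurs m₂ m₁ → Ee m₁ m₂ = Ee m₂ m₁)

/-- The edge relation of the directed graph `𝒢` on the meet-irreducibles. -/
def Gedge (m₁ m₂ : L) : Prop :=
  MeetIrred m₁ ∧ MeetIrred m₂ ∧ ∃ a ∈ Uset m₂, m₁ ∈ MnotAbove a

end Latticedefs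

/-- The system `Ω` has a non-negative integer solution. -/
def HasSolOmega (L : Type*) [Lattice L] [OrderBot L] : Prop :=
  ∃ W Ee, SolvesOmega (L := L) W Ee

/-- The directed graph `𝒢` on the meet-irreducibles is acyclic. -/
def GAcyclic (L : Type*) [Lattice L] : Prop :=
  ∀ m : L, ¬ Relation.TransGen (Gedge (L := L)) m m

section ChipFiring

variable {V : Type*} {E : V → V → ℕ}

theorem validSeq_append {c : V → ℕ} {l₁ l₂ : List V} :
    ValidSeq E c (l₁ ++ l₂) ↔ ValidSeq E c l₁ ∧ ValidSeq E (fireList E c l₁) l₂ := by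
  induction l₁ generalizing c with
  | nil => simp [ValidSeq, fireList]
  | cons v l ih => simp [ValidSeq, fireList, ih, and_assoc]

theorem fireList_append {c : V → ℕ} {l₁ l₂ : List V} :
    fireList E c (l₁ ++ l₂) = fireList E (fireList E c l₁) l₂ := by
  induction l₁ generalizing c with
  | nil => simp [fireList]
  | cons v l ih => simp [fireList, ih]

theorem Reaches.trans {a b c : V → ℕ} (hab : Reaches E a b) (hbc : Reaches E b c) :
    Reaches E a c := by
  obtain ⟨l₁, h₁, rfl⟩ := hab
  obtain ⟨l₂, h₂, rfl⟩ := hbc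
  exact ⟨l₁ ++ l₂, validSeq_append.2 ⟨h₁, h₂⟩, fireList_append⟩

theorem FireStep.reaches {c c' : V → ℕ} {v : V} (h : FireStep E c v c') : Reaches E c c' :=
  ⟨[v], ⟨h.1, trivial⟩, h.2⟩

theorem fire_mono {c c' : V → ℕ} (h : c ≤ c') (v : V) : fire E c v ≤ fire E c' v := by
  intro u
  have h₁ : c u ≤ c' u := h u
  have h₂ : c v ≤ c' v := h v
  change fire E c v u ≤ fire E c' v u
  unfold fire
  split_ifs <;> omega

theorem ValidSeq.mono {c c' : V → ℕ} (h : c ≤ c') {l : List V} (hl : ValidSeq E c l) :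
    ValidSeq E c' l := by
  induction l generalizing c c' with
  | nil => trivial
  | cons v l ih => exact ⟨⟨hl.1.1, hl.1.2.trans (h v)⟩, ih (fire_mono h v) hl.2⟩

variable [Fintype V]

/-- Conservation of chips at the vertex `u` along a firing sequence. -/
theorem fireList_add_count_mul {c : V → ℕ} {l : List V} (hl : ValidSeq E c l) (u : V) :
    fireList E c l u + l.count u * outDeg E u = c u + ∑ v, l.count v * E v u := by
  induction l generalizing c with
  | nil => simp [fireList]
  | cons v l ih =>
    have key := ih hl.2
    have hsum : ∑ x, (v :: l).count x * E x u = (∑ x, l.count x * E x u) + E v u := by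
      simp [List.count_cons, add_mul, Finset.sum_add_distrib]
    rw [hsum]
    have hv := hl.1.2
    simp only [fireList]
    by_cases huv : u = v
    · subst huv
      simp only [fire, if_true] at key
      rw [List.count_cons_self, add_mul]
      omega
    · simp only [fire, if_neg huv] at key
      rw [List.count_cons_of_ne (Ne.symm huv)]
      omega

theorem fireList_eq_of_count_eq {c : V → ℕ} {l₁ l₂ : List V} (h₁ : ValidSeq E c l₁)
    (h₂ : ValidSeq E c l₂) (h : ∀ v, l₁.count v = l₂.count v) :
    fireList E c l₁ = fireList E c l₂ := by
  funext u
  have e₁ := fireList_add_count_mul h₁ u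
  have e₂ := fireList_add_count_mul h₂ u
  simp only [h] at e₁
  omega

/-- If `v` has fired equally often along both sequences and every vertex has fired at least as
often along `l₂`, then `v` has at least as many chips after `l₂`. -/
theorem fireList_apply_le {c : V → ℕ} {l₁ l₂ : List V} (h₁ : ValidSeq E c l₁)
    (h₂ : ValidSeq E c l₂) (h : ∀ v, l₁.count v ≤ l₂.count v) {u : V}
    (hu : l₁.count u = l₂.count u) : fireList E c l₁ u ≤ fireList E c l₂ u := by
  have e₁ := fireList_add_count_mul h₁ u
  have e₂ := fireList_add_count_mul h₂ u
  have : ∑ v, l₁.count v * E v u ≤ ∑ v, l₂.count v * E v u :=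
    Finset.sum_le_sum fun v _ => Nat.mul_le_mul_right _ (h v)
  rw [hu] at e₁
  omega

/-- The exchange property of firing sequences. -/
theorem ValidSeq.exchange {c : V → ℕ} {l₁ l₂ : List V} (h₁ : ValidSeq E c l₁)
    (h₂ : ValidSeq E c l₂) :
    ∃ l, ValidSeq E (fireList E c l₁) l ∧ ∀ v, l.count v = l₂.count v - l₁.count v := by
  induction l₂ using List.reverseRecOn with
  | nil => exact ⟨[], trivial, by simp⟩
  | append_singleton l₂ v ih =>
    obtain ⟨h₂, hv⟩ := validSeq_append.1 h₂
    obtain ⟨l, hl, hcount⟩ := ih h₂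
    by_cases hlt : l₂.count v < l₁.count v
    · refine ⟨l, hl, fun u => ?_⟩
      rw [hcount, List.count_append]
      by_cases huv : u = v
      · subst huv
        simp
        omega
      · rw [List.count_singleton, if_neg (by simpa using Ne.symm huv)]
        omega
    · refine ⟨l ++ [v], validSeq_append.2 ⟨hl, ⟨hv.1.1, hv.1.2.trans ?_⟩, trivial⟩,
        fun u => ?_⟩
      · rw [← fireList_append]
        apply fireList_apply_le h₂ (validSeq_append.2 ⟨h₁, hl⟩)
        · intro u
          rw [List.count_append, hcount]
          omega
        · rw [List.count_append, hcount]
          omega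
      · rw [List.count_append, List.count_append, hcount]
        by_cases huv : u = v
        · subst huv
          simp
          omega
        · rw [List.count_singleton, if_neg (by simpa using Ne.symm huv)]
          omega

theorem count_le_of_fixedPt {c : V → ℕ} {l₁ l₂ : List V} (h₁ : ValidSeq E c l₁)
    (h₂ : ValidSeq E c l₂) (hfix : FixedPt E (fireList E c l₁)) (v : V) :
    l₂.count v ≤ l₁.count v := by
  obtain ⟨l, hl, hcount⟩ := h₁.exchange h₂
  cases l with
  | nil =>
    have := hcount v
    simp at this
    omega
  | cons u l => exact absurd hl.1 (hfix u)

theorem eq_nil_of_le_fireList {c fp : V → ℕ} (hfp : Reaches E c fp) (hfix : FixedPt E fp)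
    {l : List V} (hl : ValidSeq E c l) (hle : c ≤ fireList E c l) : l = [] := by
  obtain ⟨l', hl', rfl⟩ := hfp
  rw [List.eq_nil_iff_forall_not_mem]
  intro v hv
  have := count_le_of_fixedPt hl' (validSeq_append.2 ⟨hl, hl'.mono hle⟩) hfix v
  rw [List.count_append] at this
  have := List.count_pos_iff.2 hv
  omega

theorem count_le_of_fireList_eq {c fp : V → ℕ} {l₁ l₂ : List V} (h₁ : ValidSeq E c l₁)
    (h₂ : ValidSeq E c l₂) (heq : fireList E c l₁ = fireList E c l₂)
    (hfp : Reaches E (fireList E c l₁) fp) (hfix : FixedPt E fp) (v : V) :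
    l₂.count v ≤ l₁.count v := by
  obtain ⟨l, hl, hcount⟩ := h₁.exchange h₂
  have hnil : l = [] := by
    refine eq_nil_of_le_fireList hfp hfix hl fun u => ?_
    have e₁ := fireList_add_count_mul h₁ u
    have e₂ := fireList_add_count_mul h₂ u
    have e₃ := fireList_add_count_mul hl u
    rw [← heq] at e₂
    have hsum : ∑ v, l₂.count v * E v u ≤
        (∑ v, l₁.count v * E v u) + ∑ v, l.count v * E v u := by
      rw [← Finset.sum_add_distrib]
      refine Finset.sum_le_sum fun v _ => ?_
      rw [← add_mul]
      refine Nat.mul_le_mul_right _ ?_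
      rw [hcount]
      omega
    change fireList E c l₁ u ≤ fireList E (fireList E c l₁) l u
    by_cases hu : l₂.count u ≤ l₁.count u
    · have : l.count u = 0 := by rw [hcount]; omega
      rw [this] at e₃
      omega
    · have : l₂.count u = l₁.count u + l.count u := by rw [hcount]; omega
      rw [this, add_mul] at e₂
      omega
  have := hcount v
  simp [hnil] at this
  omega

/-- In a game reaching a unique fixed point, the number of firings of each vertex depends only
on the configuration reached. -/
theorem ReachesUFP.count_eq {O : V → ℕ} (h : ReachesUFP E O) {l₁ l₂ : List V}
    (h₁ : ValidSeq E O l₁) (h₂ : ValidSeq E O l₂) (heq : fireList E O l₁ = fireList E O l₂)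
    (v : V) : l₁.count v = l₂.count v := by
  obtain ⟨fp, -, hfix, hreach⟩ := h
  exact le_antisymm
    (count_le_of_fireList_eq h₂ h₁ heq.symm (hreach _ ⟨l₂, h₂, rfl⟩) hfix v)
    (count_le_of_fireList_eq h₁ h₂ heq (hreach _ ⟨l₁, h₁, rfl⟩) hfix v)

end ChipFiring

section Shots

variable {V : Type*} {E : V → V → ℕ} {O : V → ℕ} {L : Type*}
  {f : L ≃ {c : V → ℕ // Reaches E O c}}

/-- The number of firings of `v` needed to reach the configuration `f a`. -/
noncomputable def shot (f : L ≃ {c : V → ℕ // Reaches E O c}) (a : L) (v : V) : ℕ :=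
  (f a).2.choose.count v

theorem exists_validSeq_shot (f : L ≃ {c : V → ℕ // Reaches E O c}) (a : L) :
    ∃ l, ValidSeq E O l ∧ fireList E O l = (f a).1 ∧ ∀ v, l.count v = shot f a v :=
  ⟨_, (f a).2.choose_spec.1, (f a).2.choose_spec.2, fun _ => rfl⟩

theorem exists_fireStep_of_firable (f : L ≃ {c : V → ℕ // Reaches E O c}) {a : L} {v : V}
    (h : Firable E (f a).1 v) : ∃ b, FireStep E (f a).1 v (f b).1 := by
  have hr : Reaches E O (fire E (f a).1 v) := (f a).2.trans ⟨[v], ⟨h, trivial⟩, rfl⟩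
  exact ⟨f.symm ⟨_, hr⟩, h, by simp⟩

theorem exists_fireStep_le_of_lt [Lattice L]
    (hf : ∀ a b : L, a ≤ b ↔ Reaches E (f a).1 (f b).1)
    {a b : L} (h : a < b) :
    ∃ v c, FireStep E (f a).1 v (f c).1 ∧ c ≤ b := by
  obtain ⟨l, hl, hb⟩ := (hf a b).1 h.le
  cases l with
  | nil => exact absurd (f.injective (Subtype.ext hb)) h.ne
  | cons v l =>
    obtain ⟨c, hc⟩ := exists_fireStep_of_firable f hl.1
    exact ⟨v, c, hc, (hf c b).2 ⟨l, hc.2 ▸ hl.2, by rw [← hc.2]; exact hb⟩⟩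

theorem map_bot_eq [Lattice L] [OrderBot L]
    (hf : ∀ a b : L, a ≤ b ↔ Reaches E (f a).1 (f b).1) : (f ⊥).1 = O := by
  have h : (f.symm ⟨O, [], trivial, rfl⟩ : L) = ⊥ :=
    le_bot_iff.1 ((hf _ _).2 (by simpa using (f ⊥).2))
  rw [← h]
  simp

theorem eq_bot_or_exists_fireStep [Lattice L] [OrderBot L]
    (hf : ∀ a b : L, a ≤ b ↔ Reaches E (f a).1 (f b).1)
    (a : L) :
    a = ⊥ ∨ ∃ c v, FireStep E (f c).1 v (f a).1 := by
  obtain ⟨l, hl, hfa⟩ := (f a).2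
  rcases List.eq_nil_or_concat l with rfl | ⟨l, v, rfl⟩
  · left
    apply f.injective
    apply Subtype.ext
    rw [map_bot_eq hf, ← hfa]
    rfl
  · right
    rw [List.concat_eq_append] at hl hfa
    obtain ⟨hl, hv⟩ := validSeq_append.1 hl
    refine ⟨f.symm ⟨fireList E O l, l, hl, rfl⟩, v, ?_⟩
    rw [Equiv.apply_symm_apply]
    exact ⟨hv.1, by rw [← hfa, fireList_append]; rfl⟩

variable [Fintype V]

theorem count_eq_shot (hu : ReachesUFP E O) {a : L} {l : List V} (hl : ValidSeq E O l)
    (ha : fireList E O l = (f a).1) (v : V) : l.count v = shot f a v :=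
  hu.count_eq hl (f a).2.choose_spec.1 (ha.trans (f a).2.choose_spec.2.symm) v

theorem shot_add_count (hu : ReachesUFP E O) {a b : L} {l : List V}
    (hl : ValidSeq E (f a).1 l) (hb : fireList E (f a).1 l = (f b).1) (v : V) :
    shot f b v = shot f a v + l.count v := by
  obtain ⟨la, hla, hfa, hca⟩ := exists_validSeq_shot f a
  rw [← hfa] at hl hb
  rw [← hca, ← List.count_append]
  exact (count_eq_shot hu (validSeq_append.2 ⟨hla, hl⟩) (fireList_append.trans hb) v).symm

theorem shot_of_fireStep (hu : ReachesUFP E O) {a b : L} {v : V}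
    (h : FireStep E (f a).1 v (f b).1) (u : V) :
    shot f b u = shot f a u + if u = v then 1 else 0 := by
  have hl : ValidSeq E (f a).1 [v] := ⟨h.1, trivial⟩
  rw [shot_add_count hu hl h.2, List.count_singleton]
  by_cases huv : u = v
  · simp [huv]
  · rw [if_neg huv, if_neg (by simpa using Ne.symm huv)]

theorem chips_add_shot_mul (f : L ≃ {c : V → ℕ // Reaches E O c}) (a : L) (u : V) :
    (f a).1 u + shot f a u * outDeg E u = O u + ∑ v, shot f a v * E v u := by
  obtain ⟨l, hl, hfa, hc⟩ := exists_validSeq_shot f a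
  have := fireList_add_count_mul hl u
  simpa only [hfa, hc] using this

variable [Lattice L]

theorem shot_mono
    (hf : ∀ a b : L, a ≤ b ↔ Reaches E (f a).1 (f b).1)
    (hu : ReachesUFP E O) {a b : L} (h : a ≤ b) (v : V) :
    shot f a v ≤ shot f b v := by
  obtain ⟨l, hl, hb⟩ := (hf a b).1 h
  have := shot_add_count hu hl hb v
  omega

theorem lt_of_fireStep
    (hf : ∀ a b : L, a ≤ b ↔ Reaches E (f a).1 (f b).1)
    (hu : ReachesUFP E O) {a b : L} {v : V}
    (h : FireStep E (f a).1 v (f b).1) : a < b := by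
  refine lt_of_le_of_ne ((hf a b).2 h.reaches) ?_
  rintro rfl
  have := shot_of_fireStep hu h v
  simp at this

theorem covBy_of_fireStep
    (hf : ∀ a b : L, a ≤ b ↔ Reaches E (f a).1 (f b).1)
    (hu : ReachesUFP E O) {a b : L} {v : V}
    (h : FireStep E (f a).1 v (f b).1) : a ⋖ b := by
  refine ⟨lt_of_fireStep hf hu h, fun c hac hcb => ?_⟩
  obtain ⟨u, d, hd, hdc⟩ := exists_fireStep_le_of_lt hf hac
  obtain ⟨w, e, he, heb⟩ := exists_fireStep_le_of_lt hf hcb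
  have h₁ := shot_mono hf hu heb w
  have h₂ := shot_mono hf hu hdc w
  have h₃ := shot_of_fireStep hu hd w
  have h₄ := shot_of_fireStep hu he w
  have h₅ := shot_of_fireStep hu h w
  have g₁ := shot_mono hf hu hcb.le u
  have g₂ := shot_mono hf hu hdc u
  have g₃ := shot_of_fireStep hu hd u
  have g₅ := shot_of_fireStep hu h u
  grind

theorem exists_fireStep_of_covBy
    (hf : ∀ a b : L, a ≤ b ↔ Reaches E (f a).1 (f b).1)
    (hu : ReachesUFP E O) {a b : L} (h : a ⋖ b) :
    ∃ v, FireStep E (f a).1 v (f b).1 := by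
  obtain ⟨v, c, hc, hcb⟩ := exists_fireStep_le_of_lt hf h.lt
  have hac := lt_of_fireStep hf hu hc
  obtain rfl := (h.eq_or_eq hac.le hcb).resolve_left hac.ne'
  exact ⟨v, hc⟩

theorem shot_sup_le
    (hf : ∀ a b : L, a ≤ b ↔ Reaches E (f a).1 (f b).1)
    (hu : ReachesUFP E O) (a b : L) (v : V) :
    shot f (a ⊔ b) v ≤ max (shot f a v) (shot f b v) := by
  obtain ⟨la, hla, hfa, hca⟩ := exists_validSeq_shot f a
  obtain ⟨lb, hlb, hfb, hcb⟩ := exists_validSeq_shot f b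
  obtain ⟨l₁, hl₁, hc₁⟩ := hla.exchange hlb
  obtain ⟨l₂, hl₂, hc₂⟩ := hlb.exchange hla
  have hv₁ := validSeq_append.2 ⟨hla, hl₁⟩
  have hv₂ := validSeq_append.2 ⟨hlb, hl₂⟩
  have heq : fireList E O (la ++ l₁) = fireList E O (lb ++ l₂) :=
    fireList_eq_of_count_eq hv₁ hv₂ fun u => by
      simp only [List.count_append, hc₁, hc₂]
      omega
  obtain ⟨z, hz⟩ := f.surjective ⟨fireList E O (la ++ l₁), la ++ l₁, hv₁, rfl⟩
  have hz' : fireList E O (la ++ l₁) = (f z).1 := by rw [hz]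
  have haz : a ≤ z := (hf a z).2 ⟨l₁, hfa ▸ hl₁, by rw [← hfa, ← hz', fireList_append]⟩
  have hbz : b ≤ z :=
    (hf b z).2 ⟨l₂, hfb ▸ hl₂, by rw [← hfb, ← hz', heq, fireList_append]⟩
  refine (shot_mono hf hu (sup_le haz hbz) v).trans ?_
  rw [← count_eq_shot hu hv₁ hz', List.count_append, hc₁, hca, hcb]
  omega

/-- A firing available at `x` stays available, as the same firing of the same vertex, at every
`z ≥ x` at which it has not been performed yet. -/
theorem exists_fireStep_of_le
    (hf : ∀ a b : L, a ≤ b ↔ Reaches E (f a).1 (f b).1)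
    (hu : ReachesUFP E O) {x y z : L} {v : V}
    (h : FireStep E (f x).1 v (f y).1) (hxz : x ≤ z) (hyz : ¬ y ≤ z) :
    (∃ z', FireStep E (f z).1 v (f z').1) ∧ shot f z v = shot f x v := by
  obtain ⟨l, hl, hlz⟩ := (hf x z).1 hxz
  have hv : ValidSeq E (f x).1 [v] := ⟨h.1, trivial⟩
  have hcount : l.count v = 0 := by
    by_contra hne
    apply hyz
    obtain ⟨l', hl', hc'⟩ := hv.exchange hl
    have heq : fireList E (f x).1 ([v] ++ l') = fireList E (f x).1 l :=
      fireList_eq_of_count_eq (validSeq_append.2 ⟨hv, hl'⟩) hl fun u => by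
        rw [List.count_append, hc']
        by_cases huv : u = v
        · subst huv
          simp
          omega
        · rw [List.count_singleton, if_neg (by simpa using Ne.symm huv)]
          omega
    have hy : fireList E (f x).1 [v] = (f y).1 := h.2
    rw [fireList_append, hy, hlz] at heq
    rw [hy] at hl'
    exact (hf y z).2 ⟨l', hl', heq⟩
  refine ⟨exists_fireStep_of_firable f ⟨h.1.1, h.1.2.trans ?_⟩, ?_⟩
  · rw [← hlz]
    exact fireList_apply_le (c := (f x).1) (l₁ := []) trivial hl (by simp) (by simp [hcount])
  · rw [shot_add_count hu hl hlz, hcount, add_zero]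

theorem shot_bot [OrderBot L]
    (hf : ∀ a b : L, a ≤ b ↔ Reaches E (f a).1 (f b).1)
    (hu : ReachesUFP E O) (v : V) : shot f ⊥ v = 0 := by
  rw [← count_eq_shot hu (l := []) trivial (map_bot_eq hf).symm]
  simp

theorem induction_fireStep [OrderBot L]
    (hf : ∀ a b : L, a ≤ b ↔ Reaches E (f a).1 (f b).1)
    [WellFoundedLT L] (hu : ReachesUFP E O) {P : L → Prop} (bot : P ⊥)
    (step : ∀ a v b, FireStep E (f a).1 v (f b).1 → P a → P b) (a : L) : P a := by
  induction a using WellFoundedLT.induction with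
  | ind a ih =>
    rcases eq_bot_or_exists_fireStep hf a with rfl | ⟨c, v, h⟩
    · exact bot
    · exact step c v a h (ih c (lt_of_fireStep hf hu h))

theorem exists_fireStep_le_of_lt_shot [OrderBot L]
    (hf : ∀ a b : L, a ≤ b ↔ Reaches E (f a).1 (f b).1)
    [WellFoundedLT L] (hu : ReachesUFP E O) {v : V} {k : ℕ}
    (a : L) (h : k < shot f a v) :
    ∃ b b', FireStep E (f b).1 v (f b').1 ∧ shot f b v = k ∧ b ≤ a := by
  induction a using induction_fireStep hf hu with
  | bot => simp [shot_bot hf hu] at h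
  | step c u a hs ih =>
    have hca := (lt_of_fireStep hf hu hs).le
    by_cases hk : k < shot f c v
    · obtain ⟨b, b', h₁, h₂, h₃⟩ := ih hk
      exact ⟨b, b', h₁, h₂, h₃.trans hca⟩
    · have := shot_of_fireStep hu hs v
      split_ifs at this with hvu
      · subst hvu
        exact ⟨c, a, hs, by omega, hca⟩
      · omega

theorem fireStep_vertex_unique
    (hf : ∀ a b : L, a ≤ b ↔ Reaches E (f a).1 (f b).1)
    (hu : ReachesUFP E O) {m b b' : L} {v v' : V}
    (hm : MeetIrred m) (h : FireStep E (f m).1 v (f b).1)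
    (h' : FireStep E (f m).1 v' (f b').1) : v = v' := by
  obtain rfl := hm.unique (covBy_of_fireStep hf hu h) (covBy_of_fireStep hf hu h')
  have h₁ := shot_of_fireStep hu h v
  have h₂ := shot_of_fireStep hu h' v
  by_contra hne
  simp [hne] at h₁ h₂
  omega

/-- A meet-irreducible is determined by the vertex fired at it and the number of previous firings
of that vertex. -/
theorem meetIrred_eq_of_shot_eq
    (hf : ∀ a b : L, a ≤ b ↔ Reaches E (f a).1 (f b).1)
    (hu : ReachesUFP E O) {m m' b b' : L} {v : V}
    (hm : MeetIrred m) (hm' : MeetIrred m') (h : FireStep E (f m).1 v (f b).1)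
    (h' : FireStep E (f m').1 v (f b').1) (heq : shot f m v = shot f m' v) : m = m' := by
  have key : ∀ {m m' b : L}, MeetIrred m → FireStep E (f m).1 v (f b).1 →
      shot f m v = shot f m' v → m' ≤ m := by
    intro m m' b hm h heq
    by_contra hle
    have hlt : m < m ⊔ m' := left_lt_sup.2 hle
    obtain ⟨u, c, hc, hcle⟩ := exists_fireStep_le_of_lt hf hlt
    obtain rfl := hm.unique (covBy_of_fireStep hf hu h) (covBy_of_fireStep hf hu hc)
    have h₁ := shot_mono hf hu hcle v
    have h₂ := shot_sup_le hf hu m m' v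
    have h₃ := shot_of_fireStep hu h v
    simp at h₃
    rw [← heq, max_self] at h₂
    omega
  exact le_antisymm (key hm' h' heq.symm) (key hm h heq)

theorem exists_msetDiff_eq_singleton
    (hf : ∀ a b : L, a ≤ b ↔ Reaches E (f a).1 (f b).1)
    [Finite L] (hu : ReachesUFP E O) {x y : L} {v : V}
    (h : FireStep E (f x).1 v (f y).1) :
    ∃ m, MeetIrred m ∧ MsetDiff x y = {m} ∧ (∃ z, FireStep E (f m).1 v (f z).1) ∧
      shot f m v = shot f x v := by
  have hxy := lt_of_fireStep hf hu h
  obtain ⟨m, hm⟩ := (Set.toFinite {z : L | x ≤ z ∧ ¬ y ≤ z}).exists_maximal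
    ⟨x, le_rfl, hxy.not_ge⟩
  have hirr : MeetIrred m := by
    have hup : ∀ z, m < z → m ⊔ y ≤ z := fun z hz => by
      refine sup_le hz.le ?_
      by_contra hyz
      exact hm.not_prop_of_gt hz ⟨hm.prop.1.trans hz.le, hyz⟩
    have hcov : m ⋖ m ⊔ y :=
      ⟨left_lt_sup.2 hm.prop.2, fun c hmc hc => (hup c hmc).not_gt hc⟩
    exact ⟨m ⊔ y, hcov, fun z hz =>
      ((hz.eq_or_eq hcov.le (hup z hz.lt)).resolve_left hcov.lt.ne').symm⟩
  obtain ⟨⟨z, hz⟩, hs⟩ := exists_fireStep_of_le hf hu h hm.prop.1 hm.prop.2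
  refine ⟨m, hirr, ?_, ⟨z, hz⟩, hs⟩
  ext m'
  constructor
  · rintro ⟨hirr', hx, hy⟩
    obtain ⟨⟨z', hz'⟩, hs'⟩ := exists_fireStep_of_le hf hu h hx hy
    exact meetIrred_eq_of_shot_eq hf hu hirr' hirr hz' hz (hs'.trans hs.symm)
  · rintro rfl
    exact ⟨hirr, hm.prop.1, hm.prop.2⟩

/-- Weights on meet-irreducibles induced from weights on vertices sum to the weighted number of
firings. -/
theorem finsum_mnotAbove_eq
    (hf : ∀ a b : L, a ≤ b ↔ Reaches E (f a).1 (f b).1)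
    [Finite L] [OrderBot L] (hu : ReachesUFP E O) (G : V → ℕ)
    (e : L → ℕ) (he : ∀ m v b, MeetIrred m → FireStep E (f m).1 v (f b).1 → e m = G v) (a : L) :
    ∑ᶠ x ∈ MnotAbove a, e x = ∑ v, shot f a v * G v := by
  induction a using induction_fireStep hf hu with
  | bot =>
    have : MnotAbove (⊥ : L) = ∅ := by
      ext
      simp [MnotAbove]
    simp [this, shot_bot hf hu]
  | step a v b h ih =>
    obtain ⟨m, hm, hdiff, ⟨z, hz⟩, -⟩ := exists_msetDiff_eq_singleton hf hu h
    have hle := (lt_of_fireStep hf hu h).le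
    have hmem : ∀ x, x ∈ MsetDiff a b ↔ x = m := fun x => by simp [hdiff]
    have hins : MnotAbove b = insert m (MnotAbove a) := by
      ext x
      have := hmem x
      simp only [MsetDiff, MnotAbove, Set.mem_ofPred_eq, Set.mem_insert_iff] at this ⊢
      have hba : b ≤ x → a ≤ x := hle.trans
      tauto
    have hnot : m ∉ MnotAbove a := fun hx => hx.2 ((hmem m).2 rfl).2.1
    rw [hins, finsum_mem_insert _ hnot (Set.toFinite _), ih, he m v z hm hz]
    simp [shot_of_fireStep hu h, add_mul, Finset.sum_add_distrib, add_comm]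

theorem hasSolE_of_meetIrred
    (hf : ∀ a b : L, a ≤ b ↔ Reaches E (f a).1 (f b).1)
    [Fintype L] [OrderBot L] (hu : ReachesUFP E O) {m : L}
    (hm : MeetIrred m) : HasSolE m := by
  by_cases hbot : Uset m = {(⊥ : L)}
  · exact ⟨1, 0, fun _ => le_rfl, fun h => absurd hbot h⟩
  obtain ⟨mc, hmc, -⟩ := id hm
  obtain ⟨v, hv⟩ := exists_fireStep_of_covBy hf hu hmc
  let k := shot f m v
  -- the chips received by `v` from its neighbours
  let R : L → ℕ := fun a => ∑ u, if u = v then 0 else shot f a u * E u v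
  let N := O v + k * E v v + ∑ a, R a + 1
  let G : V → ℕ := fun u => if u = v then N else E u v
  let e : L → ℕ := fun x =>
    if h : ∃ u b, FireStep E (f x).1 u (f b).1 then G h.choose else 0
  have he : ∀ x u b, MeetIrred x → FireStep E (f x).1 u (f b).1 → e x = G u := by
    intro x u b hx h
    have hex : ∃ u b, FireStep E (f x).1 u (f b).1 := ⟨u, b, h⟩
    obtain ⟨b', hb'⟩ := hex.choose_spec
    simp only [e, dif_pos hex, fireStep_vertex_unique hf hu hx hb' h]
  have hF : ∀ a, ∑ᶠ x ∈ MnotAbove a, e x = shot f a v * N + R a := by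
    intro a
    have hsplit : ∀ u, shot f a u * G u =
        (if u = v then shot f a v * N else 0) + if u = v then 0 else shot f a u * E u v := by
      intro u
      by_cases huv : u = v <;> simp [G, huv]
    rw [finsum_mnotAbove_eq hf hu G e he, Finset.sum_congr rfl fun u _ => hsplit u,
      Finset.sum_add_distrib]
    simp [R]
  have hchips : ∀ a, (f a).1 v + shot f a v * outDeg E v =
      O v + (shot f a v * E v v + R a) := by
    intro a
    have hsplit : ∀ u, shot f a u * E u v = (if u = v then shot f a v * E v v else 0) +
        if u = v then 0 else shot f a u * E u v := by
      intro u
      by_cases huv : u = v <;> simp [huv]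
    rw [chips_add_shot_mul f a v, Finset.sum_congr rfl fun u _ => hsplit u,
      Finset.sum_add_distrib]
    simp [R]
  have hR : ∀ a, O v + k * E v v + R a < N := fun a => by
    have := Finset.single_le_sum (f := R) (fun _ _ => Nat.zero_le _) (Finset.mem_univ a)
    simp only [N]
    omega
  -- every firing of `v` preceded by exactly `k` others is labelled by `m`
  have hlabel : ∀ a b, FireStep E (f a).1 v (f b).1 → shot f a v = k → MsetDiff a b = {m} := by
    intro a b h hk
    obtain ⟨m', hm', hdiff, ⟨z, hz⟩, hs⟩ := exists_msetDiff_eq_singleton hf hu h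
    rw [hdiff, meetIrred_eq_of_shot_eq hf hu hm' hm hz hv (hs.trans hk)]
  have habove : ∀ a b, FireStep E (f a).1 v (f b).1 → shot f a v = k → ∃ x ∈ Uset m, x ≤ a := by
    intro a b h hk
    obtain ⟨x, hxa, hx⟩ := exists_minimal_le_of_wellFoundedLT
      (fun z => ∃ y, z ⋖ y ∧ MsetDiff z y = {m}) a
      ⟨b, covBy_of_fireStep hf hu h, hlabel a b h hk⟩
    exact ⟨x, hx, hxa⟩
  refine ⟨k * N + (outDeg E v + k * outDeg E v) - (k * E v v + O v), e,
    fun h => absurd h hbot, fun _ => ⟨fun a ha => ?_, fun a ha => ?_⟩⟩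
  · rw [Lset, Set.mem_ofPred_eq] at ha
    have hnot : ∀ x ∈ Uset m, ¬ x ≤ a := ha.prop
    have hle : shot f a v ≤ k := by
      by_contra! hlt
      obtain ⟨b, b', hb, hk, hba⟩ := exists_fireStep_le_of_lt_shot hf hu a hlt
      obtain ⟨x, hx, hxb⟩ := habove b b' hb hk
      exact hnot x hx (hxb.trans hba)
    rw [hF]
    have hRa := hR a
    rcases hle.lt_or_eq with hlt | heq
    · have : (shot f a v + 1) * N ≤ k * N := Nat.mul_le_mul_right _ hlt
      rw [add_mul, one_mul] at this
      omega
    · have hfire : ¬ outDeg E v ≤ (f a).1 v := by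
        intro hle
        obtain ⟨b, hb⟩ := exists_fireStep_of_firable f (a := a) ⟨hv.1.1, hle⟩
        obtain ⟨x, hx, hxa⟩ := habove a b hb heq
        exact hnot x hx hxa
      have := hchips a
      rw [heq] at this ⊢
      omega
  · rw [Uset, Set.mem_ofPred_eq] at ha
    obtain ⟨y, hay, hdiff⟩ := ha.prop
    obtain ⟨u, hstep⟩ := exists_fireStep_of_covBy hf hu hay
    have hmem : m ∈ MsetDiff a y := by simp [hdiff]
    obtain ⟨⟨z, hz⟩, hs⟩ := exists_fireStep_of_le hf hu hstep hmem.2.1 hmem.2.2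
    obtain rfl := fireStep_vertex_unique hf hu hm hv hz
    have hk : shot f a v = k := hs.symm
    have h₁ := hchips a
    have h₂ := hstep.1.2
    rw [hF]
    rw [hk] at h₁ ⊢
    omega

end Shots

/-- if a finite ULD lattice `L` is in `L(CFG)` then for every
meet-irreducible `m` of `L` the system `E(m)` has a non-negative integer solution. -/
theorem stmt3 {L : Type*} [Lattice L] [Fintype L] [BoundedOrder L]
    (hULD : IsULD L) (hL : MemLCFG L) :
    ∀ m : L, MeetIrred m → HasSolE m := by
  intro m hm
  obtain ⟨V, _, E, O, hu, f, hf⟩ := hL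
  have := Fintype.ofFinite V
  exact hasSolE_of_meetIrred hf hu hm
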